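/- Suppose μ is a measure on a space Ω and L^{x} : Ω → [0,∞) are measurable functions (x ∈ S), and suppose the mixed moments satisfy μ(∏_{j∈B} L^{x_j}) = ∑_{π ∈ P_{|B|-1}} u(x_{b}, x_{π(1)}) ⋯ u(x_{π(|B|-1)}, x_{b}) (sum of cyclic kernel products through a distinguished element b of B) for every finite multiset B = {x_1,…,x_k}. Then for every α > 0 and x_1,…,x_n ∈ S, ∑_{l=1}^{n} ∑_{partitions B_1,…,B_l of {1,…,n}} α^l ∏_{i=1}^l μ(∏_{j∈B_i} L^{x_j}) = ∑_{π ∈ P_n} α^{c(π)} ∏_{j=1}^n u(x_j, x_{π(j)}), where c(π) is the number of cycles of the permutation π. -/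

import Mathlib

open scoped Classical

/-- Product of a kernel `u` over the consecutive pairs of a list of points. -/
def chainProd {S : Type*} (u : S → S → ℝ) : List S → ℝ
  | [] => 1
  | [_] => 1
  | a :: b :: l => u a b * chainProd u (b :: l)

/-!
A permutation amounts to the partition of its domain into orbits together with, for each orbit, a
permutation moving that orbit around in a single cycle. Distributing the product over the blocks
of a partition across the sums over such cycles therefore enumerates the permutations with these
orbits, and summing over all partitions enumerates all permutations, each weighted by one
factor `α` per orbit. The cycles of a block through a distinguished point `b` are the orderings of
the remaining points, read as the closed walk that starts and ends at `b`.
-/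

section IsCycleOn

variable {ι : Type*} {f g : Equiv.Perm ι} {s : Set ι} {a : ι}

theorem isCycleOn_congr (hf : f.IsCycleOn s) (hfg : s.EqOn f g) : g.IsCycleOn s := by
  have hg : s.BijOn g s := hf.1.congr hfg
  have hg' (i : ι) : g i ∈ s ↔ i ∈ s :=
    ⟨fun hi => by simpa using hg.perm_inv.1 hi, fun hi => hg.1 hi⟩
  have restrict_eq : f.subtypePerm (fun i => hf.apply_mem_iff) = g.subtypePerm hg' :=
    Equiv.ext fun i => Subtype.ext (hfg i.2)
  refine ⟨hg, fun i hi j hj => ?_⟩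
  obtain ⟨k, hk⟩ := hf.2 hi hj
  have pow_eq := congrArg (fun p => ((p ^ k) ⟨i, hi⟩ : ι)) restrict_eq
  exact ⟨k, by simpa [Equiv.Perm.subtypePerm_zpow, hk] using pow_eq.symm⟩

theorem isCycleOn_iff_forall_mem_iff_sameCycle (ha : a ∈ s) :
    f.IsCycleOn s ↔ ∀ i, i ∈ s ↔ f.SameCycle a i := by
  refine ⟨fun h i => ⟨fun hi => h.2 ha hi, ?_⟩, fun h => ⟨f.bijOn fun i => ?_, fun i hi j hj => ?_⟩⟩
  · rintro ⟨k, rfl⟩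
    exact (h.1.perm_zpow k).mapsTo ha
  · rw [h, h, Equiv.Perm.sameCycle_apply_right]
  · exact ((h i).1 hi).symm.trans ((h j).1 hj)

end IsCycleOn

theorem finpartition_eq_of_parts_subset {ι : Type*} [DecidableEq ι] {s : Finset ι}
    {P Q : Finpartition s} (h : P.parts ⊆ Q.parts) : P = Q := by
  refine Finpartition.ext (h.antisymm fun B hB => ?_)
  obtain ⟨a, ha⟩ := Q.nonempty_of_mem_parts hB
  obtain ⟨C, hC, haC⟩ := P.exists_mem (Q.subset hB ha)
  rwa [Q.eq_of_mem_parts hB (h hC) ha haC]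

section CyclePartition

variable {ι : Type*} [Fintype ι] [DecidableEq ι]

/-- The partition of a finite type into the orbits of a permutation. Fixed points count as orbits,
so that the number of parts is the number of cycles `c(π)`. -/
noncomputable def cyclePartition (π : Equiv.Perm ι) : Finpartition (Finset.univ : Finset ι) :=
  Finpartition.ofSetoid (Equiv.Perm.SameCycle.setoid π)

theorem mem_parts_cyclePartition {π : Equiv.Perm ι} {B : Finset ι} :
    B ∈ (cyclePartition π).parts ↔ B.Nonempty ∧ π.IsCycleOn (B : Set ι) := by
  have part_eq_iff {a : ι} (ha : a ∈ B) :
      (cyclePartition π).part a = B ↔ π.IsCycleOn (B : Set ι) := by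
    rw [isCycleOn_iff_forall_mem_iff_sameCycle (Finset.mem_coe.2 ha), eq_comm, Finset.ext_iff]
    exact forall_congr' fun i => iff_congr Iff.rfl Finpartition.mem_part_ofSetoid_iff_rel
  constructor
  · intro hB
    obtain ⟨a, ha⟩ := (cyclePartition π).nonempty_of_mem_parts hB
    exact ⟨⟨a, ha⟩, (part_eq_iff ha).1 ((cyclePartition π).part_eq_of_mem hB ha)⟩
  · rintro ⟨⟨a, ha⟩, hB⟩
    rw [← (part_eq_iff ha).2 hB]
    exact (cyclePartition π).part_mem.2 (Finset.mem_univ a)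

theorem cyclePartition_eq_iff {π : Equiv.Perm ι} {P : Finpartition (Finset.univ : Finset ι)} :
    cyclePartition π = P ↔ ∀ B ∈ P.parts, π.IsCycleOn (B : Set ι) := by
  constructor
  · rintro rfl B hB
    exact (mem_parts_cyclePartition.1 hB).2
  · intro h
    exact (finpartition_eq_of_parts_subset fun B hB =>
      mem_parts_cyclePartition.2 ⟨P.nonempty_of_mem_parts hB, h B hB⟩).symm

theorem support_injOn_cycleFactorsFinset (π : Equiv.Perm ι) :
    Set.InjOn Equiv.Perm.support (π.cycleFactorsFinset : Set (Equiv.Perm ι)) := by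
  intro c hc d hd hcd
  refine Equiv.Perm.support_congr hcd.le fun i hi => ?_
  rw [(Equiv.Perm.mem_cycleFactorsFinset_iff.1 hc).2 i (by rwa [hcd]),
    (Equiv.Perm.mem_cycleFactorsFinset_iff.1 hd).2 i hi]

theorem parts_cyclePartition (π : Equiv.Perm ι) :
    (cyclePartition π).parts =
      π.cycleFactorsFinset.image Equiv.Perm.support ∪ π.supportᶜ.image singleton := by
  symm
  ext B
  simp only [Finset.mem_union, Finset.mem_image, Finset.mem_compl, Equiv.Perm.mem_support,
    not_not]
  constructor
  · rintro (⟨c, hc, rfl⟩ | ⟨i, hi, rfl⟩)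
    · exact mem_parts_cyclePartition.2
        ⟨(Equiv.Perm.mem_cycleFactorsFinset_iff.1 hc).1.nonempty_support,
          Equiv.Perm.isCycleOn_support_of_mem_cycleFactorsFinset hc⟩
    · exact mem_parts_cyclePartition.2 ⟨Finset.singleton_nonempty i, by simpa using hi⟩
  · intro hB
    obtain ⟨⟨i, hi⟩, hcyc⟩ := mem_parts_cyclePartition.1 hB
    have mem_iff := (isCycleOn_iff_forall_mem_iff_sameCycle (Finset.mem_coe.2 hi)).1 hcyc
    by_cases hfix : π i = i
    · right
      refine ⟨i, hfix, Finset.ext fun j => ?_⟩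
      rw [Finset.mem_singleton, ← Finset.mem_coe, mem_iff]
      exact ⟨fun h => h ▸ .refl _ _, fun h => (h.eq_of_left hfix).symm⟩
    · left
      refine ⟨π.cycleOf i, Equiv.Perm.cycleOf_mem_cycleFactorsFinset_iff.2
        (Equiv.Perm.mem_support.2 hfix), Finset.ext fun j => ?_⟩
      rw [Equiv.Perm.mem_support_cycleOf_iff' hfix, ← Finset.mem_coe, mem_iff]

theorem card_parts_cyclePartition (π : Equiv.Perm ι) :
    (cyclePartition π).parts.card = π.cycleType.card + (Fintype.card ι - π.support.card) := by
  have disjoint_images : Disjoint (π.cycleFactorsFinset.image Equiv.Perm.support)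
      (π.supportᶜ.image (singleton : ι → Finset ι)) := by
    rw [Finset.disjoint_left]
    intro B hB hB'
    obtain ⟨c, hc, rfl⟩ := Finset.mem_image.1 hB
    obtain ⟨i, hi, hic⟩ := Finset.mem_image.1 hB'
    exact Finset.mem_compl.1 hi
      (Equiv.Perm.mem_cycleFactorsFinset_support_le hc (hic ▸ Finset.mem_singleton_self i))
  rw [parts_cyclePartition, Finset.card_union_of_disjoint disjoint_images,
    Finset.card_image_of_injOn (support_injOn_cycleFactorsFinset π),
    Finset.card_image_of_injective _ Finset.singleton_injective, Finset.card_compl,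
    Equiv.Perm.cycleType_def, Multiset.card_map, Finset.card_val]

end CyclePartition

section CyclePermsOn

variable {ι R : Type*} [Fintype ι] [DecidableEq ι] [CommSemiring R]

/-- The permutations that move the points of `B` around in a single cycle and fix all others:
the choices of a cyclic ordering of a block. Unlike `Equiv.Perm.IsCycle`, this admits the identity
when `B` has at most one point. -/
noncomputable def cyclePermsOn (B : Finset ι) : Finset (Equiv.Perm ι) :=
  {σ | σ.IsCycleOn (B : Set ι) ∧ ∀ i ∉ B, σ i = i}

theorem mem_cyclePermsOn {B : Finset ι} {σ : Equiv.Perm ι} :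
    σ ∈ cyclePermsOn B ↔ σ.IsCycleOn (B : Set ι) ∧ ∀ i ∉ B, σ i = i := by
  simp [cyclePermsOn]

theorem eq_of_mem_cyclePermsOn {B : Finset ι} {σ τ : Equiv.Perm ι} (hσ : σ ∈ cyclePermsOn B)
    (hτ : τ ∈ cyclePermsOn B) (h : ∀ i ∈ B, σ i = τ i) : σ = τ := by
  ext i
  by_cases hi : i ∈ B
  · exact h i hi
  · rw [(mem_cyclePermsOn.1 hσ).2 i hi, (mem_cyclePermsOn.1 hτ).2 i hi]

theorem exists_mem_cyclePermsOn_eqOn {B : Finset ι} {π : Equiv.Perm ι}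
    (hπ : π.IsCycleOn (B : Set ι)) : ∃ σ ∈ cyclePermsOn B, ∀ i ∈ B, σ i = π i := by
  have hB (i : ι) : π i ∈ B ↔ i ∈ B := hπ.apply_mem_iff
  have restrict_apply (i : ι) (hi : i ∈ B) : Equiv.Perm.ofSubtype (π.subtypePerm hB) i = π i :=
    Equiv.Perm.ofSubtype_apply_of_mem _ hi
  exact ⟨_, mem_cyclePermsOn.2 ⟨isCycleOn_congr hπ fun i hi => (restrict_apply i hi).symm,
    fun i hi => Equiv.Perm.ofSubtype_apply_of_not_mem _ hi⟩, restrict_apply⟩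

theorem exists_perm_eqOn_parts {P : Finpartition (Finset.univ : Finset ι)}
    {σ : P.parts → Equiv.Perm ι} (hσ : ∀ B : P.parts, ∀ i ∈ B.1, σ B i ∈ B.1) :
    ∃ π : Equiv.Perm ι, ∀ B : P.parts, ∀ i ∈ B.1, π i = σ B i := by
  let block (i : ι) : P.parts := ⟨P.part i, P.part_mem.2 (Finset.mem_univ i)⟩
  have block_eq {B : P.parts} {i : ι} (hi : i ∈ B.1) : block i = B :=
    Subtype.ext (P.part_eq_of_mem B.2 hi)
  have block_apply (i : ι) : block (σ (block i) i) = block i :=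
    block_eq (hσ _ i (P.mem_part_self.2 (Finset.mem_univ i)))
  have glue_injective : Function.Injective fun i => σ (block i) i := by
    intro i j (hij : σ (block i) i = σ (block j) j)
    have hblock : block i = block j := by rw [← block_apply i, hij, block_apply]
    rw [hblock] at hij
    exact (σ (block j)).injective hij
  refine ⟨Equiv.ofBijective _ (Finite.injective_iff_bijective.1 glue_injective), ?_⟩
  intro B i hi
  rw [Equiv.ofBijective_apply, block_eq hi]

theorem prod_parts_prod {A : Type*} [CommMonoid A] (P : Finpartition (Finset.univ : Finset ι))
    (f : ι → A) :
    ∏ B ∈ P.parts, ∏ i ∈ B, f i = ∏ i, f i :=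
  (Finset.prod_biUnion P.disjoint).symm.trans (by rw [P.biUnion_parts])

theorem prod_sum_cyclePermsOn (w : ι → ι → R) (P : Finpartition (Finset.univ : Finset ι)) :
    ∏ B ∈ P.parts, ∑ σ ∈ cyclePermsOn B, ∏ i ∈ B, w i (σ i) =
      ∑ π with cyclePartition π = P, ∏ i, w i (π i) := by
  have mem_block {σ : P.parts → Equiv.Perm ι}
      (hσ : σ ∈ Fintype.piFinset fun B : P.parts => cyclePermsOn B.1) (B : P.parts) :
      σ B ∈ cyclePermsOn B.1 := Fintype.mem_piFinset.1 hσ B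
  have apply_mem {σ : P.parts → Equiv.Perm ι}
      (hσ : σ ∈ Fintype.piFinset fun B : P.parts => cyclePermsOn B.1) (B : P.parts) (i : ι)
      (hi : i ∈ B.1) : σ B i ∈ B.1 := (mem_cyclePermsOn.1 (mem_block hσ B)).1.1.mapsTo hi
  choose glue glue_apply using fun σ hσ => exists_perm_eqOn_parts (apply_mem (σ := σ) hσ)
  rw [← Finset.prod_coe_sort, Finset.prod_univ_sum]
  refine Finset.sum_bij glue (fun σ hσ => ?_) (fun σ hσ τ hτ hστ => ?_) (fun π hπ => ?_)
    fun σ hσ => ?_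
  · refine Finset.mem_filter.2 ⟨Finset.mem_univ _, cyclePartition_eq_iff.2 fun B hB => ?_⟩
    exact isCycleOn_congr (mem_cyclePermsOn.1 (mem_block hσ ⟨B, hB⟩)).1
      fun i hi => (glue_apply σ hσ ⟨B, hB⟩ i hi).symm
  · refine funext fun B => eq_of_mem_cyclePermsOn (mem_block hσ B) (mem_block hτ B) fun i hi => ?_
    rw [← glue_apply σ hσ B i hi, hστ, glue_apply τ hτ B i hi]
  · have hcyc := cyclePartition_eq_iff.1 (Finset.mem_filter.1 hπ).2
    choose σ hσ σ_apply using fun B : P.parts => exists_mem_cyclePermsOn_eqOn (hcyc B.1 B.2)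
    refine ⟨σ, Fintype.mem_piFinset.2 hσ, Equiv.ext fun i => ?_⟩
    obtain ⟨B, hB, hi⟩ := P.exists_mem (Finset.mem_univ i)
    rw [glue_apply σ _ ⟨B, hB⟩ i hi, σ_apply ⟨B, hB⟩ i hi]
  · rw [← prod_parts_prod P, ← Finset.prod_coe_sort P.parts]
    exact Finset.prod_congr rfl fun B _ => Finset.prod_congr rfl fun i hi => by
      rw [glue_apply σ hσ B i hi]

theorem sum_finpartition_eq_permanental (w : ι → ι → R) (α : R) :
    ∑ P : Finpartition (Finset.univ : Finset ι),
        α ^ P.parts.card * ∏ B ∈ P.parts, ∑ σ ∈ cyclePermsOn B, ∏ i ∈ B, w i (σ i) =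
      ∑ π : Equiv.Perm ι,
        α ^ (π.cycleType.card + (Fintype.card ι - π.support.card)) * ∏ i, w i (π i) := by
  rw [← Finset.sum_fiberwise Finset.univ cyclePartition]
  refine Finset.sum_congr rfl fun P _ => ?_
  rw [prod_sum_cyclePermsOn, Finset.mul_sum]
  refine Finset.sum_congr rfl fun π hπ => ?_
  rw [← card_parts_cyclePartition, (Finset.mem_filter.1 hπ).2]

end CyclePermsOn

theorem sum_isPartition_eq_sum_finpartition {ι A : Type*} [Fintype ι] [DecidableEq ι]
    [AddCommMonoid A] (f : Finset (Finset ι) → A) :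
    ∑ P ∈ (Finset.univ : Finset (Finset (Finset ι))).filter
        (fun P : Finset (Finset ι) => (∀ B ∈ P, B.Nonempty) ∧ P.sup id = Finset.univ ∧
          ((P : Set (Finset ι)).PairwiseDisjoint id)), f P =
      ∑ P : Finpartition (Finset.univ : Finset ι), f P.parts := by
  symm
  refine Finset.sum_nbij Finpartition.parts (fun P _ => ?_) (fun P _ Q _ => Finpartition.ext)
    (fun P hP => ?_) fun P _ => rfl
  · simpa using ⟨fun B hB => P.nonempty_of_mem_parts hB, P.sup_parts, P.disjoint⟩
  · obtain ⟨-, hne, hsup, hdisj⟩ := Finset.mem_filter.1 hP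
    exact ⟨⟨P, Finset.supIndep_iff_pairwiseDisjoint.2 hdisj, hsup,
      fun hbot => Finset.not_nonempty_empty (hne _ hbot)⟩,
      Finset.mem_coe.2 (Finset.mem_univ _), rfl⟩

section ClosedWalk

variable {ι R : Type*}

/-- The product of the weights `w i j` over the consecutive steps `i → j` of the closed walk that
starts at `b`, visits the points of `l` in order and returns to `b`. -/
def closedWalkWeight [MulOneClass R] (w : ι → ι → R) (b : ι) (l : List ι) : R :=
  (List.zipWith w (b :: l) (l ++ [b])).prod

theorem chainProd_map_eq_prod_zipWith {S : Type*} (u : S → S → ℝ) (x : ι → S) (a c : ι)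
    (l : List ι) :
    chainProd u (x a :: (l.map x ++ [x c])) =
      (List.zipWith (fun i j => u (x i) (x j)) (a :: l) (l ++ [c])).prod := by
  induction l generalizing a with
  | nil => simp [chainProd]
  | cons b l ih => simp [chainProd, ih]

theorem chainProd_map_eq_closedWalkWeight {S : Type*} (u : S → S → ℝ) (x : ι → S) (b : ι)
    (l : List ι) :
    chainProd u (x b :: (l.map x ++ [x b])) = closedWalkWeight (fun i j => u (x i) (x j)) b l :=
  chainProd_map_eq_prod_zipWith u x b b l

theorem nodup_iterate_card {B : Finset ι} {σ : Equiv.Perm ι} (hσ : σ.IsCycleOn (B : Set ι))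
    {b : ι} (hb : b ∈ B) : (List.iterate σ b B.card).Nodup := by
  refine List.nodup_iff_injective_getElem.2 fun i j hij => Fin.ext ?_
  simp only [List.getElem_iterate, ← Equiv.Perm.coe_pow] at hij
  exact ((hσ.pow_apply_eq_pow_apply hb).1 hij).eq_of_lt_of_lt (by simpa using i.2)
    (by simpa using j.2)

variable [DecidableEq ι]

theorem map_formPerm_eq_rotate_one {l : List ι} (hl : l.Nodup) :
    l.map l.formPerm = l.rotate 1 := by
  refine List.ext_getElem (by simp) fun i hi _ => ?_
  rw [List.getElem_map, List.getElem_rotate, List.formPerm_apply_getElem l hl i (by simpa using hi)]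

theorem closedWalkWeight_eq_prod_formPerm [CommMonoid R] (w : ι → ι → R) {b : ι} {l : List ι}
    (hl : (b :: l).Nodup) :
    closedWalkWeight w b l = ∏ i ∈ (b :: l).toFinset, w i ((b :: l).formPerm i) := by
  have tail_eq_map : l ++ [b] = (b :: l).map (b :: l).formPerm := by
    rw [map_formPerm_eq_rotate_one hl, List.rotate_cons_succ, List.rotate_zero]
  rw [closedWalkWeight, tail_eq_map, List.zipWith_map_right, List.zipWith_self,
    List.prod_toFinset _ hl]

theorem iterate_formPerm_length {b : ι} {l : List ι} (hl : (b :: l).Nodup) :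
    List.iterate (b :: l).formPerm b (b :: l).length = b :: l := by
  refine List.ext_getElem (by simp) fun i _ hi => ?_
  rw [List.getElem_iterate, ← Equiv.Perm.coe_pow, List.formPerm_pow_apply_head b l hl]
  simp only [Nat.mod_eq_of_lt hi]

theorem toFinset_iterate_card {B : Finset ι} {σ : Equiv.Perm ι} (hσ : σ.IsCycleOn (B : Set ι))
    {b : ι} (hb : b ∈ B) : (List.iterate σ b B.card).toFinset = B := by
  ext i
  simp only [List.mem_toFinset, List.mem_iterate, ← Equiv.Perm.coe_pow]
  constructor
  · rintro ⟨k, -, rfl⟩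
    exact (hσ.1.perm_pow k).mapsTo hb
  · intro hi
    obtain ⟨k, hk, rfl⟩ := hσ.exists_pow_eq hb hi
    exact ⟨k, hk, rfl⟩

theorem formPerm_iterate_card_apply {B : Finset ι} {σ : Equiv.Perm ι}
    (hσ : σ.IsCycleOn (B : Set ι)) {b i : ι} (hb : b ∈ B) (hi : i ∈ B) :
    (List.iterate σ b B.card).formPerm i = σ i := by
  obtain ⟨k, hk, rfl⟩ := hσ.exists_pow_eq hb hi
  have getElem_eq : (List.iterate σ b B.card)[k]'(by simpa using hk) = (σ ^ k) b := by
    simp [Equiv.Perm.coe_pow]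
  rw [← getElem_eq, List.formPerm_apply_getElem _ (nodup_iterate_card hσ hb), getElem_eq,
    ← Equiv.Perm.mul_apply, ← pow_succ']
  simp only [List.getElem_iterate, ← Equiv.Perm.coe_pow, List.length_iterate]
  exact (hσ.pow_apply_eq_pow_apply hb).2 (Nat.mod_modEq _ _)

theorem formPerm_mem_cyclePermsOn [Fintype ι] {l : List ι} (hl : l.Nodup) :
    l.formPerm ∈ cyclePermsOn l.toFinset := by
  refine mem_cyclePermsOn.2 ⟨?_, fun i hi => List.formPerm_apply_of_notMem (by simpa using hi)⟩
  simpa using hl.isCycleOn_formPerm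

theorem mem_permutations_erase {B : Finset ι} {b : ι} (hb : b ∈ B) {l : List ι} :
    l ∈ (B.erase b).toList.permutations.toFinset ↔ (b :: l).Nodup ∧ (b :: l).toFinset = B := by
  rw [List.mem_toFinset, List.mem_permutations, List.nodup_cons]
  constructor
  · intro hl
    have toFinset_eq : l.toFinset = B.erase b := by
      rw [List.toFinset_eq_of_perm _ _ hl, Finset.toList_toFinset]
    refine ⟨⟨?_, hl.nodup_iff.2 (Finset.nodup_toList _)⟩, ?_⟩
    · rw [← List.mem_toFinset, toFinset_eq]
      exact Finset.notMem_erase b B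
    · rw [List.toFinset_cons, toFinset_eq, Finset.insert_erase hb]
  · rintro ⟨⟨hbl, hl⟩, rfl⟩
    rw [List.toFinset_cons, Finset.erase_insert (by simpa using hbl)]
    exact (List.toFinset_toList hl).symm

theorem sum_closedWalkWeight_eq_sum_cyclePermsOn [Fintype ι] [CommSemiring R]
    (w : ι → ι → R) {B : Finset ι} {b : ι} (hb : b ∈ B) :
    ∑ l ∈ (B.erase b).toList.permutations.toFinset, closedWalkWeight w b l =
      ∑ σ ∈ cyclePermsOn B, ∏ i ∈ B, w i (σ i) := by
  have card_pos : 0 < B.card := Finset.card_pos.2 ⟨b, hb⟩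
  have cons_tail_iterate (σ : Equiv.Perm ι) :
      b :: (List.iterate σ b B.card).tail = List.iterate σ b B.card := by
    rw [← Nat.succ_pred_eq_of_pos card_pos, List.iterate, List.tail_cons]
  refine Finset.sum_nbij' (fun l => (b :: l).formPerm) (fun σ => (List.iterate σ b B.card).tail)
    (fun l hl => ?_) (fun σ hσ => ?_) (fun l hl => ?_) (fun σ hσ => ?_) fun l hl => ?_
  · obtain ⟨hnodup, rfl⟩ := (mem_permutations_erase hb).1 hl
    exact formPerm_mem_cyclePermsOn hnodup
  · have hcyc := (mem_cyclePermsOn.1 hσ).1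
    rw [mem_permutations_erase hb, cons_tail_iterate]
    exact ⟨nodup_iterate_card hcyc hb, toFinset_iterate_card hcyc hb⟩
  · obtain ⟨hnodup, rfl⟩ := (mem_permutations_erase hb).1 hl
    rw [List.toFinset_card_of_nodup hnodup, iterate_formPerm_length hnodup, List.tail_cons]
  · have hcyc := (mem_cyclePermsOn.1 hσ).1
    rw [cons_tail_iterate]
    have formPerm_mem := formPerm_mem_cyclePermsOn (nodup_iterate_card hcyc hb)
    rw [toFinset_iterate_card hcyc hb] at formPerm_mem
    exact eq_of_mem_cyclePermsOn formPerm_mem hσ fun i => formPerm_iterate_card_apply hcyc hb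
  · obtain ⟨hnodup, rfl⟩ := (mem_permutations_erase hb).1 hl
    exact closedWalkWeight_eq_prod_formPerm w hnodup

end ClosedWalk

theorem partition_sum_eq_permanental_general {ι R : Type*} [Fintype ι] [DecidableEq ι]
    [CommSemiring R] (w : ι → ι → R) (M : Finset ι → R) (α : R)
    (hM : ∀ B : Finset ι, B.Nonempty → ∃ b ∈ B,
      M B = ∑ l ∈ (B.erase b).toList.permutations.toFinset, closedWalkWeight w b l) :
    ∑ P ∈ (Finset.univ : Finset (Finset (Finset ι))).filter
        (fun P : Finset (Finset ι) => (∀ B ∈ P, B.Nonempty) ∧ P.sup id = Finset.univ ∧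
          ((P : Set (Finset ι)).PairwiseDisjoint id)),
      α ^ P.card * ∏ B ∈ P, M B =
      ∑ π : Equiv.Perm ι,
        α ^ (π.cycleType.card + (Fintype.card ι - π.support.card)) * ∏ i, w i (π i) := by
  have moment_eq (B : Finset ι) (hB : B.Nonempty) :
      M B = ∑ σ ∈ cyclePermsOn B, ∏ i ∈ B, w i (σ i) := by
    obtain ⟨b, hb, hMB⟩ := hM B hB
    rw [hMB, sum_closedWalkWeight_eq_sum_cyclePermsOn w hb]
  rw [sum_isPartition_eq_sum_finpartition, ← sum_finpartition_eq_permanental]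
  refine Finset.sum_congr rfl fun P _ => ?_
  rw [Finset.prod_congr rfl fun B hB => moment_eq B (P.nonempty_of_mem_parts hB)]

/-- If the mixed moments `μ(∏_{j ∈ B} L^{x_j})` (encoded as `M B`) are given by
sums of cyclic kernel products through any distinguished element `b ∈ B`, then
the partition sum `∑_l ∑_{B_1,…,B_l partition} α^l ∏_i M(B_i)` equals the
permanental sum `∑_{π} α^{c(π)} ∏_j u(x_j, x_{π(j)})`, where `c(π)` is the
number of cycles of `π`. -/
theorem partition_sum_eq_permanental {S : Type*} (n : ℕ) (x : Fin n → S)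
    (u : S → S → ℝ) (M : Finset (Fin n) → ℝ) (α : ℝ) (hα : 0 < α)
    (hM : ∀ B : Finset (Fin n), ∀ b ∈ B,
      M B = ∑ l ∈ ((B.erase b).toList.permutations).toFinset,
        chainProd u (x b :: (l.map x ++ [x b]))) :
    ∑ P ∈ (Finset.univ : Finset (Finset (Finset (Fin n)))).filter
        (fun P : Finset (Finset (Fin n)) => (∀ B ∈ P, B.Nonempty) ∧ P.sup id = Finset.univ ∧
          ((P : Set (Finset (Fin n))).PairwiseDisjoint id)),
      α ^ P.card * ∏ B ∈ P, M B
    = ∑ π : Equiv.Perm (Fin n),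
        α ^ (π.cycleType.card + (n - π.support.card)) * ∏ j, u (x j) (x (π j)) := by
  simpa only [Fintype.card_fin] using
    partition_sum_eq_permanental_general (fun i j => u (x i) (x j)) M α
      fun B ⟨b, hb⟩ => ⟨b, hb, by simp only [hM B b hb, chainProd_map_eq_closedWalkWeight]⟩
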